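/- There exist a constant c > 0 and λ₀ ∈ (0,1] such that for all λ ∈ (0,λ₀) and all (x,p) ∈ ℝ², c ≤ V_λ(x,p). -/

import Mathlib

open MeasureTheory Real

/-- Standard Gaussian density. -/
noncomputable def gauss (q : ℝ) : ℝ := (Real.sqrt (2 * Real.pi))⁻¹ * Real.exp (-q ^ 2 / 2)

/-- The constant η = (1/16)·√(π/2). -/
noncomputable def eta : ℝ := (1 / 16) * Real.sqrt (Real.pi / 2)

/-- Collision jump-rate kernel. -/
noncomputable def Jker (lam p p' : ℝ) : ℝ :=
  (eta * (1 + lam) / 2) * |p' - p| * gauss (((1 - lam) / 2) * p' - ((1 + lam) / 2) * p)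

/-- Escape rate. -/
noncomputable def Esc (lam p : ℝ) : ℝ := ∫ p' : ℝ, Jker lam p p'

/-- The Hamiltonian H(x,p) = p²/2 + V(x). -/
noncomputable def Ham (V : ℝ → ℝ) (x p : ℝ) : ℝ := p ^ 2 / 2 + V x

/-- A_λ(x,p): expected jump of √2·H^{1/2} under the kernel. -/
noncomputable def Afun (V : ℝ → ℝ) (lam x p : ℝ) : ℝ :=
  ∫ p' : ℝ,
    (Real.sqrt 2 * Real.sqrt (Ham V x p') - Real.sqrt 2 * Real.sqrt (Ham V x p)) *
      Jker lam p p'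

/-- V_λ(x,p): the centered second jump moment of √2·H^{1/2}. -/
noncomputable def Vfun (V : ℝ → ℝ) (lam x p : ℝ) : ℝ :=
  ∫ p' : ℝ,
    (Real.sqrt 2 * Real.sqrt (Ham V x p') - Real.sqrt 2 * Real.sqrt (Ham V x p) -
        Afun V lam x p / Esc lam p) ^ 2 * Jker lam p p'

lemma aux_f (v p : ℝ) (hv : 0 ≤ v) :
    Real.sqrt 2 * Real.sqrt (p ^ 2 / 2 + v) = Real.sqrt (p ^ 2 + 2 * v) := by
  rw [← Real.sqrt_mul (by norm_num)]
  congr 1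
  ring

lemma gauss_pos (q : ℝ) : 0 < gauss q := by
  unfold gauss
  have := Real.pi_pos
  positivity

lemma eta_pos : 0 < eta := by
  unfold eta
  have := Real.pi_pos
  positivity

lemma gauss_ge (q : ℝ) (h0 : 0 ≤ q) (h : q ≤ 4) : gauss 4 ≤ gauss q := by
  unfold gauss
  have : q ^ 2 ≤ 4 ^ 2 := by gcongr
  apply mul_le_mul_of_nonneg_left _ (by positivity)
  apply Real.exp_le_exp.2
  linarith

lemma Jker_nonneg (lam p p' : ℝ) (hl : 0 < lam) : 0 ≤ Jker lam p p' := by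
  unfold Jker
  have := eta_pos
  have := gauss_pos (((1 - lam) / 2) * p' - ((1 + lam) / 2) * p)
  positivity

lemma Jker_neg (lam p p' : ℝ) : Jker lam (-p) (-p') = Jker lam p p' := by
  unfold Jker gauss
  have h1 : |-p' - -p| = |p' - p| := by rw [← abs_neg]; congr 1; ring
  rw [h1]
  congr 3
  ring

lemma integrable_aux (v lam p a : ℝ) (hv : 0 ≤ v) (hl : 0 < lam) (hl1 : lam < 1) :
    Integrable (fun p' : ℝ => (Real.sqrt (p' ^ 2 + 2 * v) - a) ^ 2 * Jker lam p p') := by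
  set al := (1 - lam) / 2 with hal
  have halpos : 0 < al := by rw [hal]; linarith
  set be := (1 + lam) / 2 * p with hbe
  set K := Real.sqrt (2 * v) + |a| + |p| with hK
  have hK0 : 0 ≤ K := by positivity
  have heta := eta_pos
  set C := (eta * (1 + lam) / 2) * (Real.sqrt (2 * Real.pi))⁻¹ with hC
  have hC0 : 0 ≤ C := by positivity
  have hint : Integrable (fun y : ℝ => C * 6 * Real.exp (K + be ^ 2 / 2 + 2 / al ^ 2) *
      Real.exp (-(al ^ 2 / 8) * y ^ 2)) :=
    (integrable_exp_neg_mul_sq (by positivity)).const_mul _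
  refine hint.mono' ?_ ?_
  · apply Continuous.aestronglyMeasurable
    unfold Jker gauss
    fun_prop
  · refine Filter.Eventually.of_forall fun y => ?_
    rw [Real.norm_of_nonneg (mul_nonneg (sq_nonneg _) (Jker_nonneg _ _ _ hl))]
    have h1 : |Real.sqrt (y ^ 2 + 2 * v) - a| ≤ K + |y| := by
      have h2 : Real.sqrt (y ^ 2 + 2 * v) ≤ |y| + Real.sqrt (2 * v) := by
        apply Real.sqrt_le_iff.2 ⟨by positivity, ?_⟩
        have := Real.sq_sqrt (show 0 ≤ 2 * v by linarith)
        have h3 := sq_abs y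
        have : 0 ≤ |y| * Real.sqrt (2 * v) := by positivity
        nlinarith
      have h3 := Real.sqrt_nonneg (y ^ 2 + 2 * v)
      have h4 := abs_sub (Real.sqrt (y ^ 2 + 2 * v)) a
      rw [abs_of_nonneg h3] at h4
      have := abs_nonneg p
      linarith
    have h2 : |y - p| ≤ K + |y| := by
      have h4 := abs_sub y p
      have := abs_nonneg a
      have := Real.sqrt_nonneg (2 * v)
      linarith
    have h3 : (Real.sqrt (y ^ 2 + 2 * v) - a) ^ 2 * |y - p| ≤ 6 * Real.exp (K + |y|) := by
      have h5 := Real.pow_div_factorial_le_exp (K + |y|) (by positivity) 3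
      have h6 : (Real.sqrt (y ^ 2 + 2 * v) - a) ^ 2 * |y - p| ≤ (K + |y|) ^ 2 * (K + |y|) := by
        rw [← sq_abs (Real.sqrt (y ^ 2 + 2 * v) - a)]
        gcongr
      norm_num [Nat.factorial] at h5
      nlinarith
    have h4 : |y| ≤ al ^ 2 / 8 * y ^ 2 + 2 / al ^ 2 := by
      have h5 : al ^ 2 / 8 * y ^ 2 + 2 / al ^ 2 - |y| = (al ^ 2 * |y| - 4) ^ 2 / (8 * al ^ 2) := by
        rw [← sq_abs y]
        field_simp
        ring
      have : 0 ≤ (al ^ 2 * |y| - 4) ^ 2 / (8 * al ^ 2) := by positivity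
      linarith
    have h5 : Real.exp (K + |y|) * Real.exp (-(al * y - be) ^ 2 / 2) ≤
        Real.exp (K + be ^ 2 / 2 + 2 / al ^ 2) * Real.exp (-(al ^ 2 / 8) * y ^ 2) := by
      rw [← Real.exp_add, ← Real.exp_add]
      apply Real.exp_le_exp.2
      nlinarith [sq_nonneg (al * y - 2 * be)]
    calc (Real.sqrt (y ^ 2 + 2 * v) - a) ^ 2 * Jker lam p y
        = C * ((Real.sqrt (y ^ 2 + 2 * v) - a) ^ 2 * |y - p|) *
          Real.exp (-(al * y - be) ^ 2 / 2) := by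
          unfold Jker gauss; rw [hC, hal, hbe]; ring
      _ ≤ C * (6 * Real.exp (K + |y|)) * Real.exp (-(al * y - be) ^ 2 / 2) := by gcongr
      _ = C * 6 * (Real.exp (K + |y|) * Real.exp (-(al * y - be) ^ 2 / 2)) := by ring
      _ ≤ C * 6 * (Real.exp (K + be ^ 2 / 2 + 2 / al ^ 2) *
          Real.exp (-(al ^ 2 / 8) * y ^ 2)) := by gcongr
      _ = _ := by ring

lemma integral_ge (F : ℝ → ℝ) (hF : Integrable F) (h0 : ∀ y, 0 ≤ F y) (s t m : ℝ)
    (hst : s + 2 ≤ t) (hm : 0 ≤ m) (h : ∀ y ∈ Set.Icc s t, m ≤ F y) : 2 * m ≤ ∫ y, F y := by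
  have h1 : ∫ y in Set.Icc s t, F y ≤ ∫ y, F y :=
    setIntegral_le_integral hF (Filter.Eventually.of_forall h0)
  have h2 : ∫ _y in Set.Icc s t, m ≤ ∫ y in Set.Icc s t, F y := by
    apply setIntegral_mono_on _ hF.integrableOn measurableSet_Icc h
    exact continuous_const.continuousOn.integrableOn_Icc
  rw [setIntegral_const, Measure.real, Real.volume_Icc, ENNReal.toReal_ofReal (by linarith),
    smul_eq_mul] at h2
  nlinarith

lemma J_ge (lam p y k : ℝ) (hl : 0 < lam) (hl1 : lam < 1) (hp : 0 ≤ p) (hk : 1 ≤ k) (hk3 : k ≤ 3)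
    (hy : y ∈ Set.Icc ((2 * k + (1 + lam) * p) / (1 - lam))
      ((2 * (k + 1) + (1 + lam) * p) / (1 - lam))) : eta * gauss 4 ≤ Jker lam p y := by
  have hl' : 0 < 1 - lam := by linarith
  obtain ⟨h1, h2⟩ := hy
  rw [div_le_iff₀ hl'] at h1
  rw [le_div_iff₀ hl'] at h2
  have hg : gauss 4 ≤ gauss (((1 - lam) / 2) * y - ((1 + lam) / 2) * p) := by
    apply gauss_ge <;> nlinarith
  have hlp : 0 ≤ lam * p := by positivity
  have hyp : 2 ≤ y - p := by
    by_contra hc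
    push Not at hc
    nlinarith
  have heta := eta_pos
  have hg4 := gauss_pos 4
  unfold Jker
  have h3 : 2 ≤ |y - p| := hyp.trans (le_abs_self _)
  calc eta * gauss 4 = (eta * (1 + 0) / 2) * 2 * gauss 4 := by ring
    _ ≤ _ := by gcongr

lemma f_gap (v M s t : ℝ) (hv : 0 ≤ v) (hvM : 2 * v ≤ M ^ 2) (hM : 0 ≤ M) (hs : 1 ≤ s)
    (hst : s + 2 ≤ t) :
    Real.sqrt (s ^ 2 + 2 * v) + 2 / (1 + M) ≤ Real.sqrt (t ^ 2 + 2 * v) := by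
  set F := Real.sqrt (s ^ 2 + 2 * v) with hF
  set G := Real.sqrt (t ^ 2 + 2 * v) with hG
  have hF2 : F ^ 2 = s ^ 2 + 2 * v := Real.sq_sqrt (by positivity)
  have hG2 : G ^ 2 = t ^ 2 + 2 * v := Real.sq_sqrt (by positivity)
  have hF1 : F ≤ s + M := Real.sqrt_le_iff.2 ⟨by positivity, by nlinarith⟩
  have hG1 : G ≤ t + M := Real.sqrt_le_iff.2 ⟨by linarith, by nlinarith⟩
  have hFs : s ≤ F := Real.le_sqrt_of_sq_le (by linarith)
  have hGs : t ≤ G := Real.le_sqrt_of_sq_le (by linarith)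
  have h1 : 2 / (1 + M) ≤ G - F := by
    rw [div_le_iff₀ (by linarith)]
    by_contra hc
    push Not at hc
    have h3 : (G - F) * (G + F) = (t - s) * (t + s) := by nlinarith
    have h4 : 2 * (t + s) ≤ (G - F) * (G + F) := by rw [h3]; nlinarith
    have hGF : 0 ≤ G - F := by
      by_contra h; push Not at h; nlinarith
    have h5 : (G - F) * (G + F) ≤ (G - F) * ((t + s) * (1 + M)) := by
      apply mul_le_mul_of_nonneg_left _ hGF
      nlinarith
    nlinarith
  linarith

lemma main_pos (v M lam p a : ℝ) (hv : 0 ≤ v) (hvM : 2 * v ≤ M ^ 2) (hM : 0 ≤ M)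
    (hl : 0 < lam) (hl1 : lam < 1) (hp : 0 ≤ p) :
    2 * ((1 / (1 + M)) ^ 2 * (eta * gauss 4)) ≤
      ∫ y, (Real.sqrt (y ^ 2 + 2 * v) - a) ^ 2 * Jker lam p y := by
  have hl' : 0 < 1 - lam := by linarith
  set P : ℝ → ℝ := fun k => (2 * k + (1 + lam) * p) / (1 - lam) with hP
  have hstep : ∀ k, P k + 2 ≤ P (k + 1) := by
    intro k
    have : P (k + 1) = P k + 2 / (1 - lam) := by simp only [hP]; field_simp; ring
    rw [this]
    have : 2 ≤ 2 / (1 - lam) := by rw [le_div_iff₀ hl']; linarith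
    linarith
  have hP1 : 1 ≤ P 1 := by
    simp only [hP]; rw [le_div_iff₀ hl']
    have : 0 ≤ (1 + lam) * p := by positivity
    linarith
  have h12 := hstep 1
  have h23 := hstep 2
  norm_num at h12 h23
  have hgap := f_gap v M (P 2) (P 3) hv hvM hM (by linarith) h23
  have hd : 2 / (1 + M) = 1 / (1 + M) + 1 / (1 + M) := by ring
  have hdpos : 0 < 1 / (1 + M) := by positivity
  set d := 1 / (1 + M)
  have hF := integrable_aux v lam p a hv hl hl1
  have heta := eta_pos
  have hg4 := gauss_pos 4
  have h0 : ∀ y, 0 ≤ (Real.sqrt (y ^ 2 + 2 * v) - a) ^ 2 * Jker lam p y := fun y =>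
    mul_nonneg (sq_nonneg _) (Jker_nonneg _ _ _ hl)
  rcases le_total a (Real.sqrt (P 2 ^ 2 + 2 * v) + d) with h | h
  · refine integral_ge _ hF h0 (P 3) (P (3 + 1)) _ (hstep 3) (by positivity) fun y hy => ?_
    have hJ := J_ge lam p y 3 hl hl1 hp (by norm_num) le_rfl hy
    have : Real.sqrt (P 3 ^ 2 + 2 * v) ≤ Real.sqrt (y ^ 2 + 2 * v) := by
      apply Real.sqrt_le_sqrt
      have := hy.1
      nlinarith
    have : d ^ 2 ≤ (Real.sqrt (y ^ 2 + 2 * v) - a) ^ 2 := by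
      apply pow_le_pow_left₀ hdpos.le; linarith
    gcongr
  · refine integral_ge _ hF h0 (P 1) (P (1 + 1)) _ (hstep 1) (by positivity) fun y hy => ?_
    have hJ := J_ge lam p y 1 hl hl1 hp (by norm_num) (by norm_num) hy
    have : Real.sqrt (y ^ 2 + 2 * v) ≤ Real.sqrt (P 2 ^ 2 + 2 * v) := by
      apply Real.sqrt_le_sqrt
      have h1 := hy.1
      have h2 := hy.2
      norm_num at h2
      nlinarith
    have : d ^ 2 ≤ (Real.sqrt (y ^ 2 + 2 * v) - a) ^ 2 := by
      nlinarith
    gcongr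

lemma main_all (v M lam p a : ℝ) (hv : 0 ≤ v) (hvM : 2 * v ≤ M ^ 2) (hM : 0 ≤ M)
    (hl : 0 < lam) (hl1 : lam < 1) :
    2 * ((1 / (1 + M)) ^ 2 * (eta * gauss 4)) ≤
      ∫ y, (Real.sqrt (y ^ 2 + 2 * v) - a) ^ 2 * Jker lam p y := by
  rcases le_total 0 p with hp | hp
  · exact main_pos v M lam p a hv hvM hM hl hl1 hp
  · have h := main_pos v M lam (-p) a hv hvM hM hl hl1 (by linarith)
    rw [← integral_neg_eq_self] at h
    simpa only [Jker_neg, neg_sq] using h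

theorem stmt_13 (V : ℝ → ℝ) (hV : ContDiff ℝ 1 V) (hVpos : ∀ x, 0 ≤ V x)
    (hVper : Function.Periodic V 1) :
    ∃ c : ℝ, 0 < c ∧ ∃ lam₀ ∈ Set.Ioc (0 : ℝ) 1,
      ∀ lam : ℝ, 0 < lam → lam < lam₀ → ∀ x p : ℝ,
        c ≤ Vfun V lam x p := by
  obtain ⟨B, hB⟩ := (isCompact_Icc (a := (0 : ℝ)) (b := 1)).bddAbove_image
    hV.continuous.continuousOn
  have hVB : ∀ x, V x ≤ B := by
    intro x
    obtain ⟨y, hy, hxy⟩ := hVper.exists_mem_Ico₀ one_pos x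
    rw [hxy]
    exact hB ⟨y, ⟨hy.1, hy.2.le⟩, rfl⟩
  have hB0 : 0 ≤ B := (hVpos 0).trans (hVB 0)
  set M := Real.sqrt (2 * B)
  have hM : 0 ≤ M := Real.sqrt_nonneg _
  have hM2 : M ^ 2 = 2 * B := Real.sq_sqrt (by positivity)
  have heta := eta_pos
  have hg4 := gauss_pos 4
  refine ⟨2 * ((1 / (1 + M)) ^ 2 * (eta * gauss 4)), by positivity, 1, by norm_num, ?_⟩
  intro lam hl hl1 x p
  have h := main_all (V x) M lam p
    (Real.sqrt 2 * Real.sqrt (Ham V x p) + Afun V lam x p / Esc lam p) (hVpos x)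
    (by rw [hM2]; linarith [hVB x]) hM hl hl1
  refine h.trans (le_of_eq ?_)
  unfold Vfun
  congr 1
  funext y
  have : Real.sqrt 2 * Real.sqrt (Ham V x y) = Real.sqrt (y ^ 2 + 2 * V x) :=
    aux_f (V x) y (hVpos x)
  rw [this]
  ring
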